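/- arXiv:1012.1103 — 2 statements merged into one kernel-verified Lean document; each statement's English description precedes it below -/
import Mathlib

section
/- Let (X,T) be a topological dynamical system and 𝒰 a finite partition of X into closed-open sets. Let s ≥ 0 and N ∈ ℕ. If Z ⊆ X is analytic, then M^s_N(𝒰, Z) = sup { M^s_N(𝒰, K) : K ⊆ Z, K compact }. -/
/-!
Two facts give the theorem.

*Continuity from below* (`exists_lt_coverM_of_iUnion`): if `Z n` increases to `Z`, then
`M(Z) ≤ sup M(Z n)`. As the elements of `𝒰` are disjoint, two strings `u`, `v` with
`X(u) ∩ X(v) ≠ ∅` are comparable for the prefix order. Hence for two families `A`, `B` the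
prefix-minimal strings of `A ∪ B` cover everything that `A` or `B` covers, while the remaining
strings together with `A ∩ B` still cover what both `A` and `B` cover: a form of strong
subadditivity (`strWeight_minStr_add_coverM_le`). Choosing covers `Λ n` of `Z n` that are optimal
up to `ε n`, the families of minimal strings of `Λ 0 ∪ ⋯ ∪ Λ n` have weight at most
`M(Z n) + ∑ ε i`. Every minimal string of `⋃ Λ n` eventually lies in these families, so the minimal
strings of `⋃ Λ n` form a cover of `Z` of weight at most `sup M(Z n) + ∑ ε i`.

*Capacitability*: write `Z = f(ℕ^ℕ)` and let `c < M(Z)`. By continuity from below, bounds `b k` can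
be chosen successively so that `c < M(f(S k))` for all `k`, where `S k = {x | ∀ i < k, x i ≤ b i}`.
The set `K = f({x | ∀ i, x i ≤ b i})` is compact, and a cover of `K` is a cover by open sets, so
by compactness it already covers some `f(S k)`; thus `c ≤ M(K)`.
-/

open Filter Set MeasureTheory Topology
open scoped ENNReal NNReal

section CoverMeasure

variable {X : Type*} [MetricSpace X]

/-- For a string `u = U₁…U_n` of elements of a cover, the set
`X(u) = U₁ ∩ T⁻¹U₂ ∩ ⋯ ∩ T^{-(n-1)}U_n`. -/
def stringSet (T : X → X) : List (Set X) → Set X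
  | [] => Set.univ
  | U :: l => U ∩ T ⁻¹' stringSet T l

/-- `M^s_N(𝒰, Z) = inf_Λ Σ_{u ∈ Λ} e^{-s·m(u)}`, the infimum being over all families
`Λ` of strings of elements of `𝒰`, each of length `m(u) ≥ N`, such that the sets `X(u)`,
`u ∈ Λ`, cover `Z`. -/
noncomputable def coverM (T : X → X) (U : Finset (Set X)) (s : ℝ) (N : ℕ) (Z : Set X) :
    ℝ≥0∞ :=
  ⨅ (Λ : Set (List (Set X)))
    (_ : ∀ u ∈ Λ, (∀ V ∈ u, V ∈ U) ∧ N ≤ u.length)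
    (_ : Z ⊆ ⋃ u ∈ Λ, stringSet T u),
    ∑' u : Λ, ENNReal.ofReal (Real.exp (-s * (u : List (Set X)).length))

end CoverMeasure

/-! ### Strings, prefixes and covers -/

section Strings

variable {X : Type*}

/-- Two strings over disjoint sets whose sets `X(u)`, `X(v)` share a point are comparable: the
shorter one is a prefix of the longer one. -/
lemma prefix_of_mem_stringSet {T : X → X} {U : Finset (Set X)}
    (hUdisj : (U : Set (Set X)).PairwiseDisjoint id) :
    ∀ (u v : List (Set X)) (x : X), (∀ V ∈ u, V ∈ U) → (∀ V ∈ v, V ∈ U) →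
      x ∈ stringSet T u → x ∈ stringSet T v → u.length ≤ v.length → u <+: v
  | [], v, _, _, _, _, _, _ => List.nil_prefix
  | a :: u, [], _, _, _, _, _, h => by simp at h
  | a :: u, b :: v, x, hu, hv, hxu, hxv, h => by
    have hab : a = b := by
      by_contra hne
      exact Set.disjoint_left.1 (hUdisj (hu a (by simp)) (hv b (by simp)) hne) hxu.1 hxv.1
    subst hab
    exact (List.prefix_cons_inj a).2 (prefix_of_mem_stringSet hUdisj u v (T x)
      (fun V hV => hu V (by simp [hV])) (fun V hV => hv V (by simp [hV])) hxu.2 hxv.2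
      (by simpa using h))

lemma stringSet_subset_of_prefix {T : X → X} :
    ∀ {u v : List (Set X)}, u <+: v → stringSet T v ⊆ stringSet T u
  | [], _, _ => fun _ _ => trivial
  | _ :: _, [], h => by simp at h
  | a :: u, b :: v, h => by
    obtain ⟨rfl, h'⟩ := List.cons_prefix_cons.1 h
    exact inter_subset_inter_right _ (preimage_mono (stringSet_subset_of_prefix h'))

lemma isOpen_stringSet [TopologicalSpace X] {T : X → X} (hT : Continuous T) {U : Finset (Set X)}
    (hU : ∀ V ∈ U, IsClopen V) :
    ∀ u : List (Set X), (∀ V ∈ u, V ∈ U) → IsOpen (stringSet T u)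
  | [], _ => isOpen_univ
  | a :: u, h => (hU a (h a (by simp))).isOpen.inter
      ((isOpen_stringSet hT hU u fun V hV => h V (by simp [hV])).preimage hT)

/-- The family `Λ` is admissible in the definition of `M^s_N(𝒰, ·)`: it consists of strings over
`𝒰` of length at least `N`. -/
def Admissible (U : Finset (Set X)) (N : ℕ) (Λ : Set (List (Set X))) : Prop :=
  ∀ u ∈ Λ, (∀ V ∈ u, V ∈ U) ∧ N ≤ u.length

/-- The total weight `∑_{u ∈ Λ} e^{-s·m(u)}` of a family of strings. -/
noncomputable def strWeight (s : ℝ) (Λ : Set (List (Set X))) : ℝ≥0∞ :=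
  ∑' u : Λ, ENNReal.ofReal (Real.exp (-s * (u : List (Set X)).length))

/-- The strings of `S` that have no proper prefix in `S`. -/
def minStr (S : Set (List (Set X))) : Set (List (Set X)) :=
  {u | u ∈ S ∧ ∀ v ∈ S, v <+: u → v = u}

lemma minStr_subset (S : Set (List (Set X))) : minStr S ⊆ S := fun _ h => h.1

lemma exists_minStr_prefix {S : Set (List (Set X))} :
    ∀ (n : ℕ) (u : List (Set X)), u.length = n → u ∈ S → ∃ v ∈ minStr S, v <+: u := by
  intro n
  induction n using Nat.strong_induction_on with
  | _ n ih =>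
    intro u hn hu
    by_cases h : u ∈ minStr S
    · exact ⟨u, h, List.prefix_rfl⟩
    · have : ∃ v ∈ S, v <+: u ∧ v ≠ u := by
        by_contra! hcon
        exact h ⟨hu, hcon⟩
      obtain ⟨v, hv, hp, hne⟩ := this
      have hlt : v.length < n := by
        subst hn
        refine lt_of_le_of_ne hp.length_le fun he => hne (hp.eq_of_length he)
      obtain ⟨w, hw, hwv⟩ := ih _ hlt v rfl hv
      exact ⟨w, hw, hwv.trans hp⟩

lemma cover_subset_cover_minStr (T : X → X) (S : Set (List (Set X))) :
    (⋃ u ∈ S, stringSet T u) ⊆ ⋃ u ∈ minStr S, stringSet T u := by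
  intro x hx
  simp only [mem_iUnion] at hx ⊢
  obtain ⟨u, hu, hx⟩ := hx
  obtain ⟨v, hv, hp⟩ := exists_minStr_prefix _ u rfl hu
  exact ⟨v, hv, stringSet_subset_of_prefix hp hx⟩

lemma coverM_le {T : X → X} {U : Finset (Set X)} {s : ℝ} {N : ℕ} {Z : Set X}
    {Λ : Set (List (Set X))} (h1 : Admissible U N Λ) (h2 : Z ⊆ ⋃ u ∈ Λ, stringSet T u) :
    coverM T U s N Z ≤ strWeight s Λ :=
  iInf_le_of_le Λ (iInf_le_of_le h1 (iInf_le_of_le h2 le_rfl))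

lemma exists_cover_lt {T : X → X} {U : Finset (Set X)} {s : ℝ} {N : ℕ} {Z : Set X} {c : ℝ≥0∞}
    (h : coverM T U s N Z < c) :
    ∃ Λ, Admissible U N Λ ∧ (Z ⊆ ⋃ u ∈ Λ, stringSet T u) ∧ strWeight s Λ < c := by
  simp only [coverM, iInf_lt_iff] at h
  obtain ⟨Λ, h1, h2, h3⟩ := h
  exact ⟨Λ, h1, h2, h3⟩

lemma coverM_mono {T : X → X} {U : Finset (Set X)} {s : ℝ} {N : ℕ} {Z Z' : Set X}
    (h : Z ⊆ Z') : coverM T U s N Z ≤ coverM T U s N Z' :=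
  le_of_forall_gt fun _ hc => by
    obtain ⟨Λ, h1, h2, h3⟩ := exists_cover_lt hc
    exact (coverM_le h1 (h.trans h2)).trans_lt h3

/-! ### Strong subadditivity and continuity from below -/

/-- The strong subadditivity step: the minimal strings of `A ∪ B`, plus a cover of whatever both
`A` and `B` cover, weigh no more than `A` and `B` together. -/
lemma strWeight_minStr_add_coverM_le {T : X → X} {U : Finset (Set X)}
    (hUdisj : (U : Set (Set X)).PairwiseDisjoint id) {s : ℝ} {N : ℕ} {Z : Set X}
    {A B : Set (List (Set X))} (hA : Admissible U N A) (hB : Admissible U N B)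
    (hZA : Z ⊆ ⋃ u ∈ A, stringSet T u) (hZB : Z ⊆ ⋃ u ∈ B, stringSet T u) :
    strWeight s (minStr (A ∪ B)) + coverM T U s N Z ≤ strWeight s A + strWeight s B := by
  set R : Set (List (Set X)) := ((A ∪ B) \ minStr (A ∪ B)) ∪ (A ∩ B) with hR
  have hAB : Admissible U N (A ∪ B) := fun u hu => hu.elim (hA u) (hB u)
  have hRa : Admissible U N R := fun u hu =>
    hAB u (hu.elim (fun h => h.1) (fun h => Or.inl h.1))
  have hZR : Z ⊆ ⋃ u ∈ R, stringSet T u := by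
    intro x hx
    have h1 := hZA hx
    have h2 := hZB hx
    simp only [mem_iUnion] at h1 h2 ⊢
    obtain ⟨u, hu, hxu⟩ := h1
    obtain ⟨v, hv, hxv⟩ := h2
    by_cases huv : u = v
    · subst huv
      exact ⟨u, Or.inr ⟨hu, hv⟩, hxu⟩
    -- the longer of the two strings has the shorter one as a proper prefix
    rcases le_total u.length v.length with hl | hl
    · have hp := prefix_of_mem_stringSet hUdisj u v x (hA u hu).1 (hB v hv).1 hxu hxv hl
      exact ⟨v, Or.inl ⟨Or.inr hv, fun hm => huv (hm.2 u (Or.inl hu) hp)⟩, hxv⟩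
    · have hp := prefix_of_mem_stringSet hUdisj v u x (hB v hv).1 (hA u hu).1 hxv hxu hl
      exact ⟨u, Or.inl ⟨Or.inl hu, fun hm => huv (hm.2 v (Or.inr hv) hp).symm⟩, hxu⟩
  refine (add_le_add le_rfl (coverM_le hRa hZR)).trans ?_
  simp only [strWeight]
  rw [tsum_subtype (minStr (A ∪ B)) (fun u => ENNReal.ofReal (Real.exp (-s * u.length))),
    tsum_subtype R (fun u => ENNReal.ofReal (Real.exp (-s * u.length))),
    tsum_subtype A (fun u => ENNReal.ofReal (Real.exp (-s * u.length))),
    tsum_subtype B (fun u => ENNReal.ofReal (Real.exp (-s * u.length))),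
    ← ENNReal.tsum_add, ← ENNReal.tsum_add]
  refine ENNReal.tsum_le_tsum fun u => ?_
  have hm : u ∈ minStr (A ∪ B) → u ∈ A ∨ u ∈ B := fun h => h.1
  by_cases h1 : u ∈ A <;> by_cases h2 : u ∈ B <;> by_cases h3 : u ∈ minStr (A ∪ B) <;>
    simp_all [Set.indicator]

/-- Continuity from below of `M^s_N(𝒰, ·)` along increasing sequences. -/
lemma exists_lt_coverM_of_iUnion {T : X → X} {U : Finset (Set X)}
    (hUdisj : (U : Set (Set X)).PairwiseDisjoint id) {s : ℝ} {N : ℕ} {Z : ℕ → Set X}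
    (hZ : Monotone Z) {c : ℝ≥0∞} (hc : c < coverM T U s N (⋃ n, Z n)) :
    ∃ n, c < coverM T U s N (Z n) := by
  by_contra! hcon
  refine absurd hc (not_lt.2 ?_)
  have hctop : c ≠ ∞ := hc.ne_top
  refine ENNReal.le_of_forall_pos_le_add fun ε hε _ => ?_
  obtain ⟨ε', hε', hsum⟩ := ENNReal.exists_pos_sum_of_countable (ε := (ε : ℝ≥0∞))
    (by exact_mod_cast hε.ne') ℕ
  have hfin : ∀ n, coverM T U s N (Z n) ≠ ∞ := fun n => ne_top_of_le_ne_top hctop (hcon n)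
  have hex : ∀ n, ∃ Λ, Admissible U N Λ ∧ (Z n ⊆ ⋃ u ∈ Λ, stringSet T u) ∧
      strWeight s Λ < coverM T U s N (Z n) + ε' n := fun n =>
    exists_cover_lt (ENNReal.lt_add_right (hfin n) (by exact_mod_cast (hε' n).ne'))
  choose Λ hΛa hΛc hΛw using hex
  -- `L n` is a cover of `Z n` by minimal strings of `Λ 0 ∪ ⋯ ∪ Λ n` (except that `L 0 = Λ 0`)
  let L : ℕ → Set (List (Set X)) := fun n =>
    Nat.rec (Λ 0) (fun k S => minStr (S ∪ Λ (k + 1))) n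
  have hL0 : L 0 = Λ 0 := rfl
  have hLs : ∀ n, L (n + 1) = minStr (L n ∪ Λ (n + 1)) := fun _ => rfl
  have hLsub : ∀ n, L n ⊆ ⋃ k, Λ k := by
    intro n
    induction n with
    | zero => exact subset_iUnion Λ 0
    | succ n ih =>
      rw [hLs]
      exact (minStr_subset _).trans (union_subset ih (subset_iUnion Λ (n + 1)))
  have hUa : Admissible U N (⋃ k, Λ k) := fun u hu => by
    obtain ⟨k, hk⟩ := mem_iUnion.1 hu
    exact hΛa k u hk
  have hLa : ∀ n, Admissible U N (L n) := fun n u hu => hUa u (hLsub n hu)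
  have hLc : ∀ n, Z n ⊆ ⋃ u ∈ L n, stringSet T u := by
    rintro (_ | n)
    · exact hΛc 0
    · rw [hLs]
      exact (hΛc (n + 1)).trans ((biUnion_subset_biUnion_left subset_union_right).trans
        (cover_subset_cover_minStr T _))
  have hLw : ∀ n, strWeight s (L n) ≤
      coverM T U s N (Z n) + ∑ i ∈ Finset.range (n + 1), (ε' i : ℝ≥0∞) := by
    intro n
    induction n with
    | zero => simpa [hL0] using (hΛw 0).le
    | succ n ih =>
      have key := strWeight_minStr_add_coverM_le (s := s) hUdisj (hLa n) (hΛa (n + 1)) (hLc n)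
        ((hZ n.le_succ).trans (hΛc (n + 1)))
      rw [← hLs] at key
      refine (ENNReal.add_le_add_iff_right (hfin n)).1 ?_
      refine key.trans ((add_le_add ih (hΛw (n + 1)).le).trans (le_of_eq ?_))
      rw [Finset.sum_range_succ _ (n + 1)]
      ring
  have hmem : ∀ u ∈ minStr (⋃ k, Λ k), ∀ᶠ n in atTop, u ∈ L n := by
    intro u hu
    obtain ⟨k, hk⟩ := mem_iUnion.1 hu.1
    have hstep : ∀ n, u ∈ L n ∪ Λ (n + 1) → u ∈ L (n + 1) := by
      intro n hn
      rw [hLs]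
      exact ⟨hn, fun v hv hp => hu.2 v
        (union_subset (hLsub n) (subset_iUnion Λ (n + 1)) hv) hp⟩
    have hk' : u ∈ L k := by
      rcases k with _ | k
      · exact hk
      · exact hstep k (Or.inr hk)
    filter_upwards [eventually_ge_atTop k] with n hn
    induction n, hn using Nat.le_induction with
    | base => exact hk'
    | succ n _ ih => exact hstep n (Or.inl ih)
  have hcov : (⋃ n, Z n) ⊆ ⋃ u ∈ minStr (⋃ k, Λ k), stringSet T u :=
    (iUnion_subset fun n => (hΛc n).trans
      (biUnion_subset_biUnion_left (subset_iUnion Λ n))).trans (cover_subset_cover_minStr T _)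
  refine (coverM_le (fun u hu => hUa u hu.1) hcov).trans ?_
  -- each finite partial sum over the limit family is dominated by the weight of some `L n`
  rw [strWeight, ENNReal.tsum_eq_iSup_sum]
  refine iSup_le fun F => ?_
  have hev : ∀ᶠ n in atTop, ∀ u ∈ F, (u : List (Set X)) ∈ L n :=
    (Filter.eventually_all_finset F).2 fun u _ => hmem u u.2
  obtain ⟨n, hn⟩ := hev.exists
  have hFL : ∑ u ∈ F, ENNReal.ofReal (Real.exp (-s * (u : List (Set X)).length)) ≤
      strWeight s (L n) := by
    rw [strWeight,
      tsum_subtype (L n) (fun u => ENNReal.ofReal (Real.exp (-s * u.length)))]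
    calc _ = ∑ u ∈ F.map (Function.Embedding.subtype _),
          (L n).indicator (fun u => ENNReal.ofReal (Real.exp (-s * u.length))) u := by
          rw [Finset.sum_map]
          refine Finset.sum_congr rfl fun u hu => ?_
          simp [hn u hu]
      _ ≤ _ := ENNReal.sum_le_tsum _
  exact hFL.trans ((hLw n).trans (add_le_add (hcon n)
    ((ENNReal.sum_le_tsum _).trans hsum.le)))

end Strings

/-! ### Compact boxes in Baire space and capacitability -/

/-- An open set containing the box `{x | ∀ i, x i ≤ b i}` of `ℕ^ℕ` contains one of the sets
obtained by bounding only finitely many coordinates. -/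
lemma exists_finite_box_subset {b : ℕ → ℕ} {O : Set (ℕ → ℕ)} (hO : IsOpen O)
    (h : {x | ∀ i, x i ≤ b i} ⊆ O) : ∃ k, {x : ℕ → ℕ | ∀ i < k, x i ≤ b i} ⊆ O := by
  by_contra! hcon
  have hex : ∀ k, ∃ x : ℕ → ℕ, (∀ i < k, x i ≤ b i) ∧ x ∉ O := fun k => not_subset.1 (hcon k)
  choose x hx hxO using hex
  have hK : IsCompact (Set.pi univ fun i => Iic (b i)) :=
    isCompact_univ_pi fun i => (finite_Iic (b i)).isCompact
  -- truncate `x k` into the box; the truncations accumulate at a point `y`, and so do the `x k`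
  obtain ⟨y, hy, hlim⟩ := hK.ultrafilter_le_nhds
    ((hyperfilter ℕ).map fun k i => min (x k i) (b i))
    (by
      rw [le_principal_iff]
      exact Filter.mem_map.2 (Eventually.of_forall fun k i _ => mem_Iic.2 (min_le_right _ _)))
  have hlim' : Tendsto (fun k i => min (x k i) (b i)) (hyperfilter ℕ : Filter ℕ) (𝓝 y) := hlim
  have hxlim : Tendsto x (hyperfilter ℕ : Filter ℕ) (𝓝 y) := by
    rw [tendsto_pi_nhds] at hlim' ⊢
    intro i
    refine (hlim' i).congr' ?_
    have : ∀ᶠ k in (hyperfilter ℕ : Filter ℕ), i < k :=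
      Nat.hyperfilter_le_atTop (eventually_gt_atTop i)
    filter_upwards [this] with k hk
    exact min_eq_left (hx k i hk)
  have hyO : y ∈ O := h fun i => hy i trivial
  obtain ⟨k, hk⟩ := (hxlim.eventually (hO.mem_nhds hyO)).exists
  exact hxO k hk

/-- **Feng–Huang, Proposition 3.6(ii)**: let `(X,T)` be a topological dynamical system
and `𝒰` a finite partition of `X` into closed-open sets.  If `Z ⊆ X` is analytic, then
`M^s_N(𝒰, Z) = sup { M^s_N(𝒰, K) : K ⊆ Z compact }`. -/
theorem coverM_analytic_eq_iSup_compact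
    {X : Type*} [MetricSpace X] [CompactSpace X]
    (T : X → X) (hT : Continuous T)
    (U : Finset (Set X)) (hUclopen : ∀ V ∈ U, IsClopen V)
    (hUdisj : (U : Set (Set X)).PairwiseDisjoint id)
    (hUcover : ⋃₀ (U : Set (Set X)) = Set.univ)
    (s : ℝ) (hs : 0 ≤ s) (N : ℕ)
    (Z : Set X) (hZ : MeasureTheory.AnalyticSet Z) :
    coverM T U s N Z = ⨆ (K : Set X) (_ : K ⊆ Z) (_ : IsCompact K), coverM T U s N K := by
  refine le_antisymm ?_ (iSup_le fun K => iSup_le fun hK => iSup_le fun _ => coverM_mono hK)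
  rw [AnalyticSet] at hZ
  rcases hZ with rfl | ⟨f, hf, rfl⟩
  · exact le_iSup_of_le ∅ (le_iSup_of_le subset_rfl (le_iSup_of_le isCompact_empty le_rfl))
  refine le_of_forall_lt fun c hc => ?_
  obtain ⟨c', hcc', hc'⟩ := exists_between hc
  refine hcc'.trans_le ?_
  have step : ∀ (S : Set (ℕ → ℕ)) (k : ℕ), ∃ m, c' < coverM T U s N (f '' S) →
      c' < coverM T U s N (f '' (S ∩ {x | x k ≤ m})) := by
    intro S k
    by_cases hS : c' < coverM T U s N (f '' S)
    · have hun : f '' S = ⋃ m, f '' (S ∩ {x | x k ≤ m}) := by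
        rw [← image_iUnion, ← inter_iUnion]
        congr 1
        refine (inter_eq_left.2 fun x _ => ?_).symm
        exact mem_iUnion.2 ⟨x k, le_refl (x k)⟩
      rw [hun] at hS
      obtain ⟨m, hm⟩ := exists_lt_coverM_of_iUnion hUdisj
        (fun m m' h => image_mono (inter_subset_inter_right S
          fun x (hx : x k ≤ m) => hx.trans h)) hS
      exact ⟨m, fun _ => hm⟩
    · exact ⟨0, fun h => absurd h hS⟩
  choose g hg using step
  let S : ℕ → Set (ℕ → ℕ) := fun n => Nat.rec univ (fun k S => S ∩ {x | x k ≤ g S k}) n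
  have hSs : ∀ n, S (n + 1) = S n ∩ {x | x n ≤ g (S n) n} := fun _ => rfl
  have hSc : ∀ n, c' < coverM T U s N (f '' S n) := by
    intro n
    induction n with
    | zero => simpa [S] using hc'
    | succ n ih => exact hg _ _ ih
  let b : ℕ → ℕ := fun k => g (S k) k
  have hSb : ∀ n, {x : ℕ → ℕ | ∀ i < n, x i ≤ b i} = S n := by
    intro n
    induction n with
    | zero => simp [S]
    | succ n ih =>
      rw [hSs]
      ext x
      have hx : x ∈ S n ↔ ∀ i < n, x i ≤ b i := by rw [← ih]; rfl
      rw [mem_inter_iff, hx]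
      exact Nat.forall_lt_succ_right (p := fun i => x i ≤ b i)
  have hQ : IsCompact {x : ℕ → ℕ | ∀ i, x i ≤ b i} := by
    have : IsCompact (Set.pi univ fun i => Iic (b i)) :=
      isCompact_univ_pi fun i => (finite_Iic (b i)).isCompact
    convert this using 1
    ext x
    simp [Pi.le_def]
  refine le_iSup_of_le (f '' {x : ℕ → ℕ | ∀ i, x i ≤ b i}) (le_iSup_of_le
    (image_subset_range _ _) (le_iSup_of_le (hQ.image hf) ?_))
  refine le_of_forall_gt fun d hd => ?_
  obtain ⟨Λ, h1, h2, h3⟩ := exists_cover_lt hd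
  have hopen : IsOpen (⋃ u ∈ Λ, stringSet T u) :=
    isOpen_biUnion fun u hu => isOpen_stringSet hT hUclopen u (h1 u hu).1
  obtain ⟨k, hk⟩ := exists_finite_box_subset (hopen.preimage hf) (image_subset_iff.1 h2)
  rw [hSb] at hk
  exact (hSc k).trans_le ((coverM_le h1 (image_subset_iff.2 hk)).trans h3.le)
end

section
/- Let π : (X,T) → (Y,S) be a factor map between topological dynamical systems. Then for every E ⊆ X, h^B_top(S, π(E)) ≤ h^B_top(T, E) ≤ h^B_top(S, π(E)) + sup_{y∈Y} h^{UC}_top(T, π^{−1}(y)). -/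
/-!
Bowen's argument. For the lower bound, `π` is uniformly continuous and intertwines `T` with `S`,
so a Bowen ball of small radius in `X` is mapped into a Bowen ball of prescribed radius in `Y`, and
covers of `E` push forward to covers of `π '' E` of the same weight
(`Mtop_image_le`).

For the upper bound, let `b` exceed every fibre entropy and fix `ε > 0`. Each fibre `π⁻¹(y)` is
spanned at some time `m(y) ≥ 1` by at most `exp (b m(y))` Bowen balls
(`exists_fiber_span`). As `π` is a closed map, these balls cover the preimage of a whole
neighbourhood of `y`; compactness of `Y` yields a single `δ` (a Lebesgue number) and finitely many
times `m(y)`, all at most some `M`. Following an orbit segment of length `n` in `Y` and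
concatenating the fibre covers along it, the preimage of a ball `B_n(y, δ)` is covered by at most
`exp (b (n + M))` balls `B_n(x, 4ε)` (`exists_delta_cover`, `exists_centers`). Replacing every ball
of a cover of `π '' E` in this way gives
`M^{s+b}_{N,4ε}(E) ≤ exp (b M) M^s_{N,δ}(π E)`, and the right-hand side vanishes in the limit as
soon as `s` is larger than the entropy of `π '' E` (`Mtop_eq_zero_of_lt`).
-/

open Filter Set MeasureTheory Topology
open scoped ENNReal NNReal

section Core

variable {X : Type*} [MetricSpace X]

/-- The open Bowen ball `B_n(x, ε)` = `{y : d_n(x,y) < ε}` where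
`d_n(x,y) = max_{0 ≤ k ≤ n-1} d(T^k x, T^k y)` is the `n`-th Bowen metric. -/
def bowenBall (T : X → X) (x : X) (n : ℕ) (ε : ℝ) : Set X :=
  {y | ∀ k < n, dist (T^[k] x) (T^[k] y) < ε}

/-- The closed Bowen ball `B̄_n(x, ε)` = `{y : d_n(x,y) ≤ ε}`. -/
def bowenClosedBall (T : X → X) (x : X) (n : ℕ) (ε : ℝ) : Set X :=
  {y | ∀ k < n, dist (T^[k] x) (T^[k] y) ≤ ε}

/-- `M^s_{N,ε}(Z)`: infimum of `Σ_i exp (- s n_i)` over finite or countable families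
of open Bowen balls `{B_{n_i}(x_i, ε)}` with `n_i ≥ N` covering `Z`. -/
noncomputable def Mpre (T : X → X) (s : ℝ) (N : ℕ) (ε : ℝ) (Z : Set X) : ℝ≥0∞ :=
  ⨅ (I : Set ℕ) (x : ℕ → X) (n : ℕ → ℕ) (_ : ∀ i ∈ I, N ≤ n i)
    (_ : Z ⊆ ⋃ i ∈ I, bowenBall T (x i) (n i) ε),
    ∑' i : I, ENNReal.ofReal (Real.exp (-s * n i))

/-- `M^s_ε(Z) = lim_{N → ∞} M^s_{N,ε}(Z)` (the quantity is nondecreasing in `N`). -/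
noncomputable def MpreEps (T : X → X) (s : ℝ) (ε : ℝ) (Z : Set X) : ℝ≥0∞ :=
  ⨆ N : ℕ, Mpre T s N ε Z

/-- `M^s(Z) = lim_{ε → 0} M^s_ε(Z)` (the quantity is nondecreasing as `ε` decreases). -/
noncomputable def Mtop (T : X → X) (s : ℝ) (Z : Set X) : ℝ≥0∞ :=
  ⨆ (ε : ℝ) (_ : 0 < ε), MpreEps T s ε Z

/-- Bowen's topological entropy `h^B_top(T,Z)`: the critical value of `s` at which
`M^s(Z)` jumps from `∞` to `0`. -/
noncomputable def bowenEntropy (T : X → X) (Z : Set X) : ℝ≥0∞ :=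
  ⨆ (s : ℝ) (_ : Mtop T s Z = ∞), ENNReal.ofReal s

/-- `P^s_{N,ε}(Z)`: suprema of `Σ_i exp (- s n_i)` over finite or countable pairwise
disjoint families of closed Bowen balls `{B̄_{n_i}(x_i, ε)}` with `x_i ∈ Z`, `n_i ≥ N`. -/
noncomputable def Ppre (T : X → X) (s : ℝ) (N : ℕ) (ε : ℝ) (Z : Set X) : ℝ≥0∞ :=
  ⨆ (I : Set ℕ) (x : ℕ → X) (n : ℕ → ℕ) (_ : ∀ i ∈ I, x i ∈ Z ∧ N ≤ n i)
    (_ : ∀ i ∈ I, ∀ j ∈ I, i ≠ j →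
      Disjoint (bowenClosedBall T (x i) (n i) ε) (bowenClosedBall T (x j) (n j) ε)),
    ∑' i : I, ENNReal.ofReal (Real.exp (-s * n i))

/-- `P^s_ε(Z) = lim_{N → ∞} P^s_{N,ε}(Z)` (the quantity is nonincreasing in `N`). -/
noncomputable def PpreEps (T : X → X) (s : ℝ) (ε : ℝ) (Z : Set X) : ℝ≥0∞ :=
  ⨅ N : ℕ, Ppre T s N ε Z

/-- `𝒫^s_ε(Z) = inf { Σ_{i} P^s_ε(Z_i) : ⋃_i Z_i ⊇ Z }`. -/
noncomputable def Pouter (T : X → X) (s : ℝ) (ε : ℝ) (Z : Set X) : ℝ≥0∞ :=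
  ⨅ (Zs : ℕ → Set X) (_ : Z ⊆ ⋃ i, Zs i), ∑' i, PpreEps T s ε (Zs i)

/-- `h^P_top(T,Z,ε)`: the critical value of `s` at which `𝒫^s_ε(Z)` jumps from `∞` to `0`. -/
noncomputable def packEntropyEps (T : X → X) (ε : ℝ) (Z : Set X) : ℝ≥0∞ :=
  ⨆ (s : ℝ) (_ : Pouter T s ε Z = ∞), ENNReal.ofReal s

/-- The packing topological entropy `h^P_top(T,Z) = lim_{ε → 0} h^P_top(T,Z,ε)`
(the quantity is nondecreasing as `ε` decreases). -/
noncomputable def packEntropy (T : X → X) (Z : Set X) : ℝ≥0∞ :=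
  ⨆ (ε : ℝ) (_ : 0 < ε), packEntropyEps T ε Z

/-- `r_n(Z,ε)`: the largest cardinality of an `(n,ε)`-separated subset of `Z`,
i.e. a set in which distinct points `x, y` satisfy `d_n(x,y) > ε`. -/
noncomputable def maxSep (T : X → X) (Z : Set X) (n : ℕ) (ε : ℝ) : ℝ≥0∞ :=
  ⨆ (E : Finset X) (_ : ↑E ⊆ Z ∧
    ∀ x ∈ E, ∀ y ∈ E, x ≠ y → ∃ k < n, ε < dist (T^[k] x) (T^[k] y)),
    (E.card : ℝ≥0∞)

/-- Logarithm on `ℝ≥0∞` (with `elog ∞ = ∞`), used for counting quantities. -/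
noncomputable def elog (x : ℝ≥0∞) : ℝ≥0∞ :=
  if x = ∞ then ∞ else ENNReal.ofReal (Real.log x.toReal)

/-- The upper capacity topological entropy
`h^{UC}_top(T,Z) = lim_{ε → 0} limsup_{n → ∞} (1/n) log r_n(Z,ε)`. -/
noncomputable def upcapEntropy (T : X → X) (Z : Set X) : ℝ≥0∞ :=
  ⨆ (ε : ℝ) (_ : 0 < ε), Filter.limsup (fun n : ℕ => elog (maxSep T Z n ε) / n) Filter.atTop

/-- `- log x` as a function `ℝ≥0∞ → ℝ≥0∞` (with `negLog 0 = ∞`), used for measures of balls. -/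
noncomputable def negLog (x : ℝ≥0∞) : ℝ≥0∞ :=
  if x = 0 then ∞ else ENNReal.ofReal (-Real.log x.toReal)

variable [MeasurableSpace X]

/-- The lower local entropy `h̲_μ(T,x) = lim_{ε→0} liminf_{n→∞} -(1/n) log μ(B_n(x,ε))`. -/
noncomputable def lowerLocalEntropy (T : X → X) (μ : Measure X) (x : X) : ℝ≥0∞ :=
  ⨆ (ε : ℝ) (_ : 0 < ε),
    Filter.liminf (fun n : ℕ => negLog (μ (bowenBall T x n ε)) / n) Filter.atTop

/-- The upper local entropy `h̄_μ(T,x) = lim_{ε→0} limsup_{n→∞} -(1/n) log μ(B_n(x,ε))`. -/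
noncomputable def upperLocalEntropy (T : X → X) (μ : Measure X) (x : X) : ℝ≥0∞ :=
  ⨆ (ε : ℝ) (_ : 0 < ε),
    Filter.limsup (fun n : ℕ => negLog (μ (bowenBall T x n ε)) / n) Filter.atTop

/-- The measure-theoretical lower entropy `h̲_μ(T) = ∫ h̲_μ(T,x) dμ(x)`. -/
noncomputable def lowerEntropy (T : X → X) (μ : Measure X) : ℝ≥0∞ :=
  ∫⁻ x, lowerLocalEntropy T μ x ∂μ

/-- The measure-theoretical upper entropy `h̄_μ(T) = ∫ h̄_μ(T,x) dμ(x)`. -/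
noncomputable def upperEntropy (T : X → X) (μ : Measure X) : ℝ≥0∞ :=
  ∫⁻ x, upperLocalEntropy T μ x ∂μ

end Core

section Aux

/-! ### Covers by Bowen balls and the critical value -/

/-- A cover by Bowen balls indexed by an arbitrary countable type bounds `Mpre`. -/
lemma Mpre_le_of_countable {X ι : Type*} [MetricSpace X] [Nonempty X] [Countable ι]
    (T : X → X) (s : ℝ) (N : ℕ) (ε : ℝ) (Z : Set X) (x : ι → X) (n : ι → ℕ)
    (hn : ∀ i, N ≤ n i) (hZ : Z ⊆ ⋃ i, bowenBall T (x i) (n i) ε) :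
    Mpre T s N ε Z ≤ ∑' i, ENNReal.ofReal (Real.exp (-s * n i)) := by
  obtain ⟨f, hf⟩ := exists_injective_nat ι
  unfold Mpre
  refine iInf_le_of_le (range f) ?_
  refine iInf_le_of_le (Function.extend f x (fun _ => Classical.arbitrary X)) ?_
  refine iInf_le_of_le (Function.extend f n (fun _ => 0)) ?_
  refine iInf_le_of_le ?_ ?_
  · rintro _ ⟨i, rfl⟩
    rw [hf.extend_apply]; exact hn i
  refine iInf_le_of_le ?_ ?_
  · intro z hz
    obtain ⟨i, hi⟩ := mem_iUnion.1 (hZ hz)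
    refine mem_iUnion₂.2 ⟨f i, ⟨i, rfl⟩, ?_⟩
    rwa [hf.extend_apply, hf.extend_apply]
  · rw [← (Equiv.ofInjective f hf).tsum_eq]
    apply le_of_eq
    congr 1
    ext i
    simp [hf.extend_apply]

lemma Mpre_decay {X : Type*} [MetricSpace X] (T : X → X) (s η : ℝ) (hη : 0 ≤ η) (N : ℕ) (ε : ℝ)
    (Z : Set X) :
    Mpre T (s + η) N ε Z ≤ ENNReal.ofReal (Real.exp (-η * N)) * Mpre T s N ε Z := by
  have h0 : ENNReal.ofReal (Real.exp (-η * N)) ≠ 0 := by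
    simp [Real.exp_pos]
  rw [mul_comm, ← ENNReal.div_le_iff_le_mul (Or.inl h0) (Or.inl ENNReal.ofReal_ne_top)]
  conv_rhs => unfold Mpre
  refine le_iInf fun I => le_iInf fun x => le_iInf fun n => le_iInf fun hn => le_iInf fun hZ => ?_
  rw [ENNReal.div_le_iff_le_mul (Or.inl h0) (Or.inl ENNReal.ofReal_ne_top),
    ← ENNReal.tsum_mul_right]
  have hle : Mpre T (s + η) N ε Z ≤ ∑' i : I, ENNReal.ofReal (Real.exp (-(s + η) * n i)) :=
    iInf_le_of_le I <| iInf_le_of_le x <| iInf_le_of_le n <| iInf_le_of_le hn <| iInf_le _ hZ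
  refine hle.trans ?_
  refine ENNReal.tsum_le_tsum fun i => ?_
  rw [← ENNReal.ofReal_mul (Real.exp_pos _).le, ← Real.exp_add]
  refine ENNReal.ofReal_le_ofReal (Real.exp_le_exp.2 ?_)
  have : (N : ℝ) ≤ n i := by exact_mod_cast hn i i.2
  nlinarith

lemma Mpre_mono_N {X : Type*} [MetricSpace X] (T : X → X) (s : ℝ) {N N' : ℕ} (h : N ≤ N') (ε : ℝ)
    (Z : Set X) : Mpre T s N ε Z ≤ Mpre T s N' ε Z := by
  conv_rhs => unfold Mpre
  refine le_iInf fun I => le_iInf fun x => le_iInf fun n => le_iInf fun hn => le_iInf fun hZ => ?_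
  exact iInf_le_of_le I <| iInf_le_of_le x <| iInf_le_of_le n <|
    iInf_le_of_le (fun i hi => h.trans (hn i hi)) <| iInf_le _ hZ

/-- Beyond a parameter at which `M^s(Z)` is finite, it vanishes. -/
lemma Mtop_eq_zero_of_lt {X : Type*} [MetricSpace X] (T : X → X) {s s' : ℝ} (hs : s < s')
    (Z : Set X) (h : Mtop T s Z ≠ ∞) : Mtop T s' Z = 0 := by
  have key : ∀ ε : ℝ, 0 < ε → ∀ N, Mpre T s' N ε Z = 0 := by
    intro ε hε N
    have hb : ∀ K, Mpre T s K ε Z ≤ Mtop T s Z := fun K =>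
      (le_iSup (fun N => Mpre T s N ε Z) K).trans
        (le_iSup₂ (f := fun (ε : ℝ) (_ : 0 < ε) => MpreEps T s ε Z) ε hε)
    have hle : ∀ K ≥ N,
        Mpre T s' N ε Z ≤ ENNReal.ofReal (Real.exp (-(s' - s) * K)) * Mtop T s Z := by
      intro K hK
      have := Mpre_decay T s (s' - s) (by linarith) K ε Z
      rw [add_sub_cancel] at this
      exact (Mpre_mono_N T s' hK ε Z).trans (this.trans (by gcongr; exact hb K))
    have ht : Tendsto (fun K : ℕ => ENNReal.ofReal (Real.exp (-(s' - s) * K)) * Mtop T s Z)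
        atTop (𝓝 (ENNReal.ofReal 0 * Mtop T s Z)) := by
      refine ENNReal.Tendsto.mul_const (ENNReal.tendsto_ofReal ?_) (Or.inr h)
      refine Real.tendsto_exp_atBot.comp ?_
      exact Tendsto.const_mul_atTop_of_neg (by linarith) tendsto_natCast_atTop_atTop
    have := ge_of_tendsto ht (eventually_atTop.2 ⟨N, hle⟩)
    simpa using this
  simp only [Mtop, MpreEps, ENNReal.iSup_eq_zero]
  exact fun ε hε N => key ε hε N

/-! ### Images under the factor map -/

lemma semiconj_iterate {X Y : Type*} {T : X → X} {S : Y → Y} {π : X → Y}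
    (hπcomm : π ∘ T = S ∘ π) (k : ℕ) (x : X) : π (T^[k] x) = S^[k] (π x) := by
  have h : Function.Semiconj π T S := fun x => congrFun hπcomm x
  exact (h.iterate_right k) x

lemma Mtop_image_le {X Y : Type*} [MetricSpace X] [CompactSpace X] [MetricSpace Y]
    (T : X → X) (S : Y → Y) (π : X → Y) (hπcont : Continuous π)
    (hπcomm : π ∘ T = S ∘ π) (E : Set X) (s : ℝ) :
    Mtop S s (π '' E) ≤ Mtop T s E := by
  refine iSup₂_le fun ε hε => ?_
  obtain ⟨δ, hδ, h⟩ := Metric.uniformContinuous_iff.1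
    (CompactSpace.uniformContinuous_of_continuous hπcont) ε hε
  refine le_trans ?_ (le_iSup₂ (f := fun (ε : ℝ) (_ : 0 < ε) => MpreEps T s ε E) δ hδ)
  refine iSup_mono fun N => ?_
  conv_rhs => unfold Mpre
  refine le_iInf fun I => le_iInf fun x => le_iInf fun n => le_iInf fun hn => le_iInf fun hZ => ?_
  refine iInf_le_of_le I <| iInf_le_of_le (fun i => π (x i)) <| iInf_le_of_le n <|
    iInf_le_of_le hn <| iInf_le _ ?_
  rintro _ ⟨e, he, rfl⟩
  obtain ⟨i, hi, hmem⟩ := mem_iUnion₂.1 (hZ he)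
  refine mem_iUnion₂.2 ⟨i, hi, fun k hk => ?_⟩
  rw [← semiconj_iterate hπcomm, ← semiconj_iterate hπcomm]
  exact h (hmem k hk)

/-! ### Spanning sets of fibres -/

/-- A finite bound on the size of `(n, ε)`-separated subsets of `Z` yields an `(n, ε)`-spanning
finite set of that size: take a separated set of maximal cardinality. -/
lemma exists_span_of_maxSep_le {X : Type*} [MetricSpace X] (T : X → X) (Z : Set X) (n : ℕ)
    {ε : ℝ} (hε : 0 < ε) {C : ℝ} (hC : 0 ≤ C) (h : maxSep T Z n ε ≤ ENNReal.ofReal C) :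
    ∃ F : Finset X, (F.card : ℝ) ≤ C ∧ ∀ x ∈ Z, ∃ z ∈ F, x ∈ bowenBall T z n (2 * ε) := by
  classical
  let P : Finset X → Prop := fun E => ↑E ⊆ Z ∧
    ∀ x ∈ E, ∀ y ∈ E, x ≠ y → ∃ k < n, ε < dist (T^[k] x) (T^[k] y)
  have hcard : ∀ E, P E → (E.card : ℝ) ≤ C := by
    intro E hE
    have h1 : (E.card : ℝ≥0∞) ≤ ENNReal.ofReal C :=
      (le_iSup₂ (f := fun (E : Finset X) (_ : P E) => (E.card : ℝ≥0∞)) E hE).trans h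
    rw [← ENNReal.ofReal_natCast] at h1
    exact (ENNReal.ofReal_le_ofReal_iff hC).1 h1
  let A : Set ℕ := {c | ∃ E, P E ∧ E.card = c}
  have hA : A.Nonempty := ⟨0, ∅, ⟨by simp, by simp⟩, rfl⟩
  have hB : BddAbove A := by
    refine ⟨⌊C⌋₊, ?_⟩
    rintro _ ⟨E, hE, rfl⟩
    exact Nat.le_floor (hcard E hE)
  obtain ⟨F, hF, hFc⟩ := Nat.sSup_mem hA hB
  refine ⟨F, hcard F hF, fun x hx => ?_⟩
  by_contra hcon
  push Not at hcon
  have hsep : ∀ z ∈ F, ∃ k < n, ε < dist (T^[k] z) (T^[k] x) := by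
    intro z hz
    by_contra hno
    push Not at hno
    exact hcon z hz fun k hk => (hno k hk).trans_lt (by linarith)
  have hxF : x ∉ F := by
    intro hxF
    obtain ⟨k, _, hk⟩ := hsep x hxF
    rw [dist_self] at hk
    linarith
  have hins : P (insert x F) := by
    refine ⟨?_, ?_⟩
    · rw [Finset.coe_insert]
      exact insert_subset hx hF.1
    · intro u hu v hv huv
      rcases Finset.mem_insert.1 hu with rfl | huF
      · rcases Finset.mem_insert.1 hv with rfl | hvF
        · exact absurd rfl huv
        · obtain ⟨k, hk, hd⟩ := hsep v hvF
          exact ⟨k, hk, by rwa [dist_comm]⟩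
      · rcases Finset.mem_insert.1 hv with rfl | hvF
        · exact hsep u huF
        · exact hF.2 u huF v hvF huv
  have := le_csSup hB ⟨_, hins, rfl⟩
  rw [Finset.card_insert_of_notMem hxF, ← hFc] at this
  omega

/-- If `b` exceeds the upper capacity entropy of `Z`, then at some positive time `m` the set `Z`
is spanned by at most `exp (b m)` Bowen balls. -/
lemma exists_fiber_span {X : Type*} [MetricSpace X] (T : X → X) (Z : Set X)
    {ε : ℝ} (hε : 0 < ε) {b : ℝ} (h : upcapEntropy T Z < ENNReal.ofReal b) :
    ∃ m : ℕ, 1 ≤ m ∧ ∃ F : Finset X, (F.card : ℝ) ≤ Real.exp (b * m) ∧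
      ∀ x ∈ Z, ∃ z ∈ F, x ∈ bowenBall T z m (2 * ε) := by
  have hl : Filter.limsup (fun n : ℕ => elog (maxSep T Z n ε) / n) Filter.atTop
      < ENNReal.ofReal b :=
    (le_iSup₂ (f := fun (ε : ℝ) (_ : 0 < ε) =>
      Filter.limsup (fun n : ℕ => elog (maxSep T Z n ε) / n) Filter.atTop) ε hε).trans_lt h
  obtain ⟨m, hm, hm1⟩ := ((eventually_lt_of_limsup_lt hl).and (eventually_ge_atTop 1)).exists
  refine ⟨m, hm1, exists_span_of_maxSep_le T Z m hε (Real.exp_pos _).le ?_⟩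
  have hm0 : (m : ℝ≥0∞) ≠ 0 := by
    have : m ≠ 0 := by omega
    exact_mod_cast this
  have hlt : elog (maxSep T Z m ε) < ENNReal.ofReal b * m :=
    (ENNReal.div_lt_iff (Or.inl hm0) (Or.inl (ENNReal.natCast_ne_top m))).1 hm
  have hb : 0 < b := by
    by_contra hb
    rw [ENNReal.ofReal_of_nonpos (not_lt.1 hb)] at h
    exact not_lt_zero h
  have htop : maxSep T Z m ε ≠ ∞ := by
    intro ht
    rw [elog, if_pos ht] at hlt
    exact not_top_lt hlt
  rw [elog, if_neg htop, ← ENNReal.ofReal_natCast, ← ENNReal.ofReal_mul hb.le] at hlt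
  have hlog : Real.log (maxSep T Z m ε).toReal ≤ b * m := by
    by_contra hc
    exact absurd hlt (not_lt.2 (ENNReal.ofReal_le_ofReal (not_le.1 hc).le))
  rw [← ENNReal.ofReal_toReal htop]
  refine ENNReal.ofReal_le_ofReal ?_
  rcases (ENNReal.toReal_nonneg (a := maxSep T Z m ε)).eq_or_lt with h0 | h0
  · rw [← h0]; exact (Real.exp_pos _).le
  · exact (Real.log_le_iff_le_exp h0).1 hlog

lemma isOpen_bowenBall {X : Type*} [MetricSpace X] {T : X → X} (hT : Continuous T) (x : X) (n : ℕ)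
    (ε : ℝ) : IsOpen (bowenBall T x n ε) := by
  have : bowenBall T x n ε = ⋂ k ∈ Finset.range n, {y | dist (T^[k] x) (T^[k] y) < ε} := by
    ext y; simp [bowenBall]
  rw [this]
  refine isOpen_biInter_finset fun k _ => ?_
  exact isOpen_lt (continuous_const.dist (hT.iterate k)) continuous_const

/-! ### Preimages of Bowen balls -/

/-- The preimage of a Bowen ball `B_n(y, δ)` is covered by at most `exp (b (n + M))` sets of
`d_n`-diameter less than `4ε`. The pieces are kept as sets rather than balls because this form is
stable under concatenation of orbit segments. -/
lemma exists_delta_cover {X Y : Type*} [MetricSpace X] [CompactSpace X] [MetricSpace Y]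
    [CompactSpace Y] {T : X → X} (hT : Continuous T) {S : Y → Y}
    {π : X → Y} (hπcont : Continuous π) (hπcomm : π ∘ T = S ∘ π) {b : ℝ} (hb : 0 ≤ b)
    (h : ∀ y, upcapEntropy T (π ⁻¹' {y}) < ENNReal.ofReal b) {ε : ℝ} (hε : 0 < ε) :
    ∃ δ > 0, ∃ M : ℕ, ∀ n : ℕ, ∀ y : Y, ∃ 𝒜 : Finset (Set X),
      (𝒜.card : ℝ) ≤ Real.exp (b * (n + M)) ∧
      (∀ A ∈ 𝒜, ∀ u ∈ A, ∀ v ∈ A, v ∈ bowenBall T u n (4 * ε)) ∧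
      ∀ x, π x ∈ bowenBall S y n δ → ∃ A ∈ 𝒜, x ∈ A := by
  classical
  choose m hm1 F hFc hF using fun y => exists_fiber_span T (π ⁻¹' {y}) hε (h y)
  let U : Y → Set X := fun y => ⋃ z ∈ F y, bowenBall T z (m y) (2 * ε)
  have hU : ∀ y, IsOpen (U y) := fun y =>
    isOpen_biUnion fun z _ => isOpen_bowenBall hT z _ _
  -- `W y` is the largest set whose preimage lies in `U y`; it is open since `π` is a closed map.
  let W : Y → Set Y := fun y => (π '' (U y)ᶜ)ᶜ
  have hW : ∀ y, IsOpen (W y) := fun y =>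
    (hπcont.isClosedMap _ (hU y).isClosed_compl).isOpen_compl
  have hyW : ∀ y, y ∈ W y := by
    rintro y ⟨x, hx, hxy⟩
    obtain ⟨z, hz, hzx⟩ := hF y x hxy
    exact hx (mem_iUnion₂.2 ⟨z, hz, hzx⟩)
  have hWU : ∀ y x, π x ∈ W y → x ∈ U y := by
    intro y x hx
    by_contra hxU
    exact hx ⟨x, hxU, rfl⟩
  obtain ⟨t, ht⟩ := isCompact_univ.elim_finite_subcover W hW
    (fun y _ => mem_iUnion.2 ⟨y, hyW y⟩)
  obtain ⟨δ, hδ, hleb⟩ := lebesgue_number_lemma_of_metric (c := fun y : t => W y) isCompact_univ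
    (fun y => hW y) (by
      intro y hy
      obtain ⟨c, hc, hyc⟩ := mem_iUnion₂.1 (ht hy)
      exact mem_iUnion.2 ⟨⟨c, hc⟩, hyc⟩)
  refine ⟨δ, hδ, t.sup m, fun n => ?_⟩
  induction n using Nat.strong_induction_on with
  | _ n ih =>
  intro y
  rcases Nat.eq_zero_or_pos n with rfl | hn
  · refine ⟨{univ}, ?_, ?_, ?_⟩
    · rw [Finset.card_singleton, Nat.cast_one]
      exact Real.one_le_exp (by positivity)
    · intro A _ u _ v _ k hk
      omega
    · exact fun x _ => ⟨univ, by simp, mem_univ x⟩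
  obtain ⟨⟨c, hct⟩, hc⟩ := hleb y (mem_univ y)
  have hmc : m c ≤ t.sup m := Finset.le_sup hct
  -- The first `m c` steps of an orbit over `B_n(y, δ)` are controlled by the fibre cover at `c`.
  have hfirst : ∀ x, π x ∈ bowenBall S y n δ → ∃ z ∈ F c, x ∈ bowenBall T z (m c) (2 * ε) := by
    intro x hx
    have h0 : π x ∈ W c := hc (by
      rw [Metric.mem_ball, dist_comm]
      exact hx 0 hn)
    obtain ⟨z, hz, hzx⟩ := mem_iUnion₂.1 (hWU c x h0)
    exact ⟨z, hz, hzx⟩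
  have hdiam : ∀ z u v, u ∈ bowenBall T z (m c) (2 * ε) → v ∈ bowenBall T z (m c) (2 * ε) →
      ∀ k < m c, dist (T^[k] u) (T^[k] v) < 4 * ε := by
    intro z u v hu hv k hk
    have h1 := hu k hk
    have h2 := hv k hk
    have h3 := dist_triangle_left (T^[k] u) (T^[k] v) (T^[k] z)
    linarith
  rcases le_or_gt n (m c) with hnm | hnm
  · refine ⟨(F c).image fun z => bowenBall T z (m c) (2 * ε), ?_, ?_, ?_⟩
    · calc (((F c).image fun z => bowenBall T z (m c) (2 * ε)).card : ℝ)
          ≤ (F c).card := by exact_mod_cast Finset.card_image_le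
        _ ≤ Real.exp (b * m c) := hFc c
        _ ≤ _ := by
          refine Real.exp_le_exp.2 (mul_le_mul_of_nonneg_left ?_ hb)
          have : (m c : ℝ) ≤ (t.sup m : ℕ) := by exact_mod_cast hmc
          have : (0 : ℝ) ≤ n := by positivity
          linarith
    · intro A hA u hu v hv k hk
      obtain ⟨z, _, rfl⟩ := Finset.mem_image.1 hA
      exact hdiam z u v hu hv k (by omega)
    · intro x hx
      obtain ⟨z, hz, hzx⟩ := hfirst x hx
      exact ⟨_, Finset.mem_image_of_mem _ hz, hzx⟩
  · obtain ⟨𝒜, hAc, hAd, hAx⟩ := ih (n - m c) (by have := hm1 c; omega) (S^[m c] y)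
    refine ⟨Finset.image₂ (fun z A => bowenBall T z (m c) (2 * ε) ∩ T^[m c] ⁻¹' A) (F c) 𝒜,
      ?_, ?_, ?_⟩
    · refine (Nat.cast_le.2 (Finset.card_image₂_le _ _ _)).trans ?_
      rw [Nat.cast_mul]
      refine (mul_le_mul (hFc c) hAc (by positivity) (Real.exp_pos _).le).trans ?_
      rw [← Real.exp_add, Nat.cast_sub hnm.le]
      exact le_of_eq (by ring_nf)
    · intro A hA u hu v hv k hk
      obtain ⟨z, _, B, hB, rfl⟩ := Finset.mem_image₂.1 hA
      rcases lt_or_ge k (m c) with hkm | hkm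
      · exact hdiam z u v hu.1 hv.1 k hkm
      · have := hAd B hB _ hu.2 _ hv.2 (k - m c) (by omega)
        rwa [← Function.iterate_add_apply, ← Function.iterate_add_apply,
          Nat.sub_add_cancel hkm] at this
    · intro x hx
      obtain ⟨z, hz, hzx⟩ := hfirst x hx
      obtain ⟨B, hB, hxB⟩ := hAx (T^[m c] x) (by
        intro k hk
        rw [semiconj_iterate hπcomm, ← Function.iterate_add_apply, ← Function.iterate_add_apply]
        exact hx (k + m c) (by omega))
      exact ⟨_, Finset.mem_image₂_of_mem hz hB, hzx, hxB⟩

lemma exists_centers {X Y : Type*} [MetricSpace X] [CompactSpace X] [MetricSpace Y]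
    [CompactSpace Y] {T : X → X} (hT : Continuous T) {S : Y → Y}
    {π : X → Y} (hπcont : Continuous π) (hπcomm : π ∘ T = S ∘ π) {b : ℝ} (hb : 0 ≤ b)
    (h : ∀ y, upcapEntropy T (π ⁻¹' {y}) < ENNReal.ofReal b) {ε : ℝ} (hε : 0 < ε) :
    ∃ δ > 0, ∃ M : ℕ, ∀ n : ℕ, ∀ y : Y, ∃ F : Finset X,
      (F.card : ℝ) ≤ Real.exp (b * (n + M)) ∧
      ∀ x, π x ∈ bowenBall S y n δ → ∃ z ∈ F, x ∈ bowenBall T z n (4 * ε) := by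
  classical
  obtain ⟨δ, hδ, M, hM⟩ := exists_delta_cover hT hπcont hπcomm hb h hε
  refine ⟨δ, hδ, M, fun n y => ?_⟩
  obtain ⟨𝒜, hc, hd, hx⟩ := hM n y
  rcases isEmpty_or_nonempty X with hX | hX
  · exact ⟨∅, by simpa using (Real.exp_pos _).le, fun x => isEmptyElim x⟩
  let g : Set X → X := fun A => if hA : A.Nonempty then hA.some else Classical.arbitrary X
  refine ⟨𝒜.image g, (Nat.cast_le.2 Finset.card_image_le).trans hc, fun x hxy => ?_⟩
  obtain ⟨A, hA, hxA⟩ := hx x hxy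
  refine ⟨g A, Finset.mem_image_of_mem g hA, hd A hA _ ?_ x hxA⟩
  have hne : A.Nonempty := ⟨x, hxA⟩
  simp only [g, dif_pos hne]
  exact hne.some_mem

/-- Replacing every ball of a cover of `π '' E` by the balls covering its preimage. -/
lemma Mpre_add_le {X Y : Type*} [MetricSpace X] [CompactSpace X] [Nonempty X] [MetricSpace Y]
    [CompactSpace Y] {T : X → X} (hT : Continuous T) {S : Y → Y}
    {π : X → Y} (hπcont : Continuous π) (hπcomm : π ∘ T = S ∘ π) {b : ℝ} (hb : 0 ≤ b)
    (h : ∀ y, upcapEntropy T (π ⁻¹' {y}) < ENNReal.ofReal b) {ε : ℝ} (hε : 0 < ε) (E : Set X)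
    (s : ℝ) :
    ∃ δ > 0, ∃ M : ℕ, ∀ N, Mpre T (s + b) N (4 * ε) E ≤
      Mpre S s N δ (π '' E) * ENNReal.ofReal (Real.exp (b * M)) := by
  obtain ⟨δ, hδ, M, hM⟩ := exists_centers hT hπcont hπcomm hb h hε
  refine ⟨δ, hδ, M, fun N => ?_⟩
  have h0 : ENNReal.ofReal (Real.exp (b * M)) ≠ 0 := by simp [Real.exp_pos]
  rw [← ENNReal.div_le_iff_le_mul (Or.inl h0) (Or.inl ENNReal.ofReal_ne_top)]
  conv_rhs => unfold Mpre
  refine le_iInf fun I => le_iInf fun y => le_iInf fun n => le_iInf fun hn => le_iInf fun hZ => ?_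
  rw [ENNReal.div_le_iff_le_mul (Or.inl h0) (Or.inl ENNReal.ofReal_ne_top),
    ← ENNReal.tsum_mul_right]
  choose F hFc hF using fun i : I => hM (n i) (y i)
  refine (Mpre_le_of_countable (ι := Σ i : I, F i) T (s + b) N (4 * ε) E (fun p => p.2)
    (fun p => n p.1) (fun p => hn _ p.1.2) ?_).trans ?_
  · intro x hx
    obtain ⟨i, hi, hxi⟩ := mem_iUnion₂.1 (hZ ⟨x, hx, rfl⟩)
    obtain ⟨z, hz, hzx⟩ := hF ⟨i, hi⟩ x hxi
    exact mem_iUnion.2 ⟨⟨⟨i, hi⟩, ⟨z, hz⟩⟩, hzx⟩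
  · rw [ENNReal.tsum_sigma']
    refine ENNReal.tsum_le_tsum fun i => ?_
    dsimp only
    rw [tsum_fintype, Finset.sum_const, Finset.card_univ, Fintype.card_coe, nsmul_eq_mul,
      ← ENNReal.ofReal_natCast, ← ENNReal.ofReal_mul (by positivity),
      ← ENNReal.ofReal_mul (Real.exp_pos _).le]
    refine ENNReal.ofReal_le_ofReal ?_
    refine (mul_le_mul_of_nonneg_right (hFc i) (Real.exp_pos _).le).trans (le_of_eq ?_)
    rw [← Real.exp_add, ← Real.exp_add]
    ring_nf

lemma Mtop_add_eq_zero {X Y : Type*} [MetricSpace X] [CompactSpace X] [Nonempty X] [MetricSpace Y]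
    [CompactSpace Y] {T : X → X} (hT : Continuous T) {S : Y → Y}
    {π : X → Y} (hπcont : Continuous π) (hπcomm : π ∘ T = S ∘ π) {b : ℝ} (hb : 0 ≤ b)
    (h : ∀ y, upcapEntropy T (π ⁻¹' {y}) < ENNReal.ofReal b) (E : Set X)
    (s : ℝ) (hs : Mtop S s (π '' E) = 0) : Mtop T (s + b) E = 0 := by
  simp only [Mtop, MpreEps, ENNReal.iSup_eq_zero] at hs ⊢
  intro ε hε N
  obtain ⟨δ, hδ, M, hM⟩ := Mpre_add_le hT hπcont hπcomm hb h (ε := ε / 4) (by positivity) E s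
  have := hM N
  rw [hs δ hδ N, zero_mul, mul_div_cancel₀ ε (by norm_num)] at this
  exact nonpos_iff_eq_zero.1 this

/-- The covers in `Mpre` use a sequence of centres, which does not exist in an empty space, so
there the entropy takes the value `∞`. -/
lemma bowenEntropy_of_isEmpty {X : Type*} [MetricSpace X] [IsEmpty X] (T : X → X) (Z : Set X) :
    bowenEntropy T Z = ∞ := by
  have hM : ∀ s, Mtop T s Z = ∞ := by
    intro s
    refine top_le_iff.1 (le_trans ?_
      (le_iSup₂ (f := fun (ε : ℝ) (_ : 0 < ε) => MpreEps T s ε Z) 1 one_pos))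
    refine le_trans ?_ (le_iSup (fun N => Mpre T s N 1 Z) 0)
    simp [Mpre]
  refine ENNReal.eq_top_of_forall_nnreal_le fun r => ?_
  have := le_iSup₂ (f := fun (s : ℝ) (_ : Mtop T s Z = ∞) => ENNReal.ofReal s) (r : ℝ) (hM r)
  simpa [bowenEntropy] using this

end Aux

/-- **Feng–Huang, Theorem 3.10 (Bowen)**: if `π : (X,T) → (Y,S)` is a factor map between
topological dynamical systems, then for every `E ⊆ X`,
`h^B_top(S, π(E)) ≤ h^B_top(T, E) ≤ h^B_top(S, π(E)) + sup_{y ∈ Y} h^{UC}_top(T, π⁻¹(y))`. -/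
theorem bowenEntropy_image_le_and_le_add_fiber_upcap
    {X Y : Type*} [MetricSpace X] [CompactSpace X] [MetricSpace Y] [CompactSpace Y]
    (T : X → X) (hT : Continuous T) (S : Y → Y) (hS : Continuous S)
    (π : X → Y) (hπcont : Continuous π) (hπsurj : Function.Surjective π)
    (hπcomm : π ∘ T = S ∘ π) (E : Set X) :
    bowenEntropy S (π '' E) ≤ bowenEntropy T E ∧
      bowenEntropy T E ≤ bowenEntropy S (π '' E) + ⨆ y : Y, upcapEntropy T (π ⁻¹' {y}) := by
  refine ⟨?_, ?_⟩
  · refine iSup₂_le fun s hs => ?_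
    refine le_iSup₂ (f := fun (s : ℝ) (_ : Mtop T s E = ∞) => ENNReal.ofReal s) s ?_
    exact top_le_iff.1 (hs ▸ Mtop_image_le T S π hπcont hπcomm E s)
  rcases isEmpty_or_nonempty X with hX | hX
  · have : IsEmpty Y := ⟨fun y => isEmptyElim (hπsurj y).choose⟩
    rw [bowenEntropy_of_isEmpty S, top_add]
    exact le_top
  refine iSup₂_le fun s hs => ?_
  by_contra hlt
  rw [not_le] at hlt
  generalize ha : (⨆ y : Y, upcapEntropy T (π ⁻¹' {y})) = a at hlt
  generalize hh : bowenEntropy S (π '' E) = h at hlt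
  have hne : h + a ≠ ∞ := (hlt.trans_le le_top).ne
  have hh' : h ≠ ∞ := fun e => hne (by rw [e, top_add])
  have ha' : a ≠ ∞ := fun e => hne (by rw [e, add_top])
  have hpos : h.toReal + a.toReal < s := by
    rw [← ENNReal.toReal_add hh' ha']
    exact (ENNReal.lt_ofReal_iff_toReal_lt hne).1 hlt
  -- Split the gap between `s` and `h + a` into three equal parts `η`.
  obtain ⟨η, hη⟩ : ∃ η, η = (s - h.toReal - a.toReal) / 3 := ⟨_, rfl⟩
  have hη0 : 0 < η := by rw [hη]; linarith
  have hfin : Mtop S (h.toReal + η) (π '' E) ≠ ∞ := by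
    intro htop
    have h1 : ENNReal.ofReal (h.toReal + η) ≤ h := by
      rw [← hh]
      conv_lhs => rw [hh]
      exact le_iSup₂ (f := fun (s : ℝ) (_ : Mtop S s (π '' E) = ∞) => ENNReal.ofReal s) _ htop
    have h2 := (ENNReal.ofReal_le_iff_le_toReal hh').1 h1
    linarith
  have hzero : Mtop S (h.toReal + 2 * η) (π '' E) = 0 :=
    Mtop_eq_zero_of_lt S (by linarith) _ hfin
  have hfib : ∀ y, upcapEntropy T (π ⁻¹' {y}) < ENNReal.ofReal (a.toReal + η) := by
    intro y
    refine (le_iSup (fun y => upcapEntropy T (π ⁻¹' {y})) y).trans_lt ?_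
    rw [ha]
    exact (ENNReal.lt_ofReal_iff_toReal_lt ha').2 (by linarith)
  have hb : 0 ≤ a.toReal + η := add_nonneg ENNReal.toReal_nonneg hη0.le
  have hT0 := Mtop_add_eq_zero hT hπcont hπcomm hb hfib E _ hzero
  have hsum : h.toReal + 2 * η + (a.toReal + η) = s := by rw [hη]; ring
  rw [hsum, hs] at hT0
  exact ENNReal.top_ne_zero hT0
end
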